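/- Suppose there exist n+1 mutually unbiased orthonormal bases of ℂ^n and an affine plane of order n. Then there exists a set S of n² functions {0,1,…,n} → {1,…,n} such that the family {ψ_f : f ∈ S} is an orthonormal basis of ℂ^n ⊗ ℂ^n. -/

import Mathlib

open scoped ComplexInnerProductSpace ComplexConjugate BigOperators

/-- The tensor product `x ⊗ conj x'` of a vector with the componentwise conjugate of
another vector, viewed as a vector of `ℂ^n ⊗ ℂ^n ≅ ℂ^{n²}`. -/
noncomputable def tensConj {n : ℕ} (x x' : EuclideanSpace ℂ (Fin n)) :
    EuclideanSpace ℂ (Fin n × Fin n) :=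
  WithLp.toLp 2 fun p => x p.1 * conj (x' p.2)
/-- The state `φ = (1/√n) Σ_b v_b ⊗ conj v_b` built from a basis `v`. -/
noncomputable def meState {n : ℕ} (v : Fin n → EuclideanSpace ℂ (Fin n)) :
    EuclideanSpace ℂ (Fin n × Fin n) :=
  ((Real.sqrt n : ℂ))⁻¹ • ∑ b : Fin n, tensConj (v b) (v b)

/-- The state `ψ_f = -φ + γ_f` where `φ = (1/√n) Σ_b v_{0,b} ⊗ conj v_{0,b}` and
`γ_f = (1/√n) Σ_a v_{a,f(a)} ⊗ conj v_{a,f(a)}`. -/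
noncomputable def psiState {n : ℕ} (v : Fin (n + 1) → Fin n → EuclideanSpace ℂ (Fin n))
    (f : Fin (n + 1) → Fin n) : EuclideanSpace ℂ (Fin n × Fin n) :=
  -meState (v 0) +
    ((Real.sqrt n : ℂ))⁻¹ • ∑ a : Fin (n + 1), tensConj (v a (f a)) (v a (f a))

/-- An affine plane of order `n`, presented through its `n+1` parallel classes
`L 0, …, L n` of lines on the point set `Fin n × Fin n` (an `(n², n²+n, n+1, n, 1)` design). -/
structure IsAffinePlane (n : ℕ) (L : Fin (n + 1) → Finset (Finset (Fin n × Fin n))) :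
    Prop where
  card_class : ∀ i, (L i).card = n
  card_line : ∀ i, ∀ ℓ ∈ L i, ℓ.card = n
  parallel_disjoint : ∀ i, ∀ ℓ ∈ L i, ∀ ℓ' ∈ L i, ℓ ≠ ℓ' → ℓ ∩ ℓ' = ∅
  class_cover : ∀ i, ∀ p : Fin n × Fin n, ∃ ℓ ∈ L i, p ∈ ℓ
  classes_disjoint : ∀ i j, i ≠ j → ∀ ℓ ∈ L i, ℓ ∉ L j
  unique_line : ∀ p q : Fin n × Fin n, p ≠ q →
    ∃! ℓ : Finset (Fin n × Fin n), (∃ i, ℓ ∈ L i) ∧ p ∈ ℓ ∧ q ∈ ℓ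

/-!
Since `⟪x ⊗ conj x, y ⊗ conj y⟫ = |⟪x, y⟫|²`, mutual unbiasedness determines every inner product
between the vectors `v_{a,b} ⊗ conj v_{a,b}`, and the outcome is
`⟪ψ_f, ψ_g⟫ = (#{a | f a = g a} - 1) / n`. Thus `ψ_f` is always a unit vector, and `ψ_f ⟂ ψ_g`
exactly when `f` and `g` agree at a single place. Sending a point of the affine plane to the
function that records, for each parallel class, which of its `n` lines passes through the point
gives `n²` functions, two of which agree once because two points have one line in common.
-/

section OrthonormalBasis

variable {𝕜 E ι : Type*} [RCLike 𝕜] [NormedAddCommGroup E] [InnerProductSpace 𝕜 E]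
  [FiniteDimensional 𝕜 E] [Fintype ι]

lemma exists_orthonormalBasis_coe_eq {v : ι → E} (hv : Orthonormal 𝕜 v)
    (hcard : Fintype.card ι = Module.finrank 𝕜 E) : ∃ b : OrthonormalBasis ι 𝕜 E, ⇑b = v :=
  ⟨.mk hv (hv.linearIndependent.span_eq_top_of_card_eq_finrank' hcard).ge, by simp⟩

lemma exists_orthonormalBasis_finset_of_orthonormal_comp {α : Type*} {u : α → E} {F : ι → α}
    (hF : Orthonormal 𝕜 (u ∘ F)) (hcard : Fintype.card ι = Module.finrank 𝕜 E) :
    ∃ S : Finset α, S.card = Fintype.card ι ∧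
      ∃ b : OrthonormalBasis {x // x ∈ S} 𝕜 E, ∀ x : {x // x ∈ S}, b x = u x := by
  classical
  have hinj : Function.Injective F := hF.linearIndependent.injective.of_comp
  obtain ⟨b, hb⟩ := exists_orthonormalBasis_coe_eq hF hcard
  let e : ι ≃ {x // x ∈ Finset.univ.image F} :=
    (Equiv.ofInjective F hinj).trans (Equiv.subtypeEquivRight (by simp))
  refine ⟨Finset.univ.image F, Finset.card_image_of_injective _ hinj, b.reindex e, fun x => ?_⟩
  obtain ⟨i, rfl⟩ := e.surjective x
  simp [hb, e]

end OrthonormalBasis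

section MaximallyEntangled

variable {n : ℕ} {v : Fin n → EuclideanSpace ℂ (Fin n)}

lemma inner_tensConj (x x' y y' : EuclideanSpace ℂ (Fin n)) :
    ⟪tensConj x x', tensConj y y'⟫ = ⟪x, y⟫ * ⟪y', x'⟫ := by
  simp only [tensConj, PiLp.inner_apply, RCLike.inner_apply, map_mul, Complex.conj_conj,
    Fintype.sum_prod_type, Finset.sum_mul_sum]
  refine Finset.sum_congr rfl fun i _ => Finset.sum_congr rfl fun j _ => ?_
  ring

lemma inner_tensConj_self_eq_norm_sq (x y : EuclideanSpace ℂ (Fin n)) :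
    ⟪tensConj x x, tensConj y y⟫ = ((‖⟪x, y⟫‖ ^ 2 : ℝ) : ℂ) := by
  rw [inner_tensConj, ← inner_conj_symm y x, Complex.mul_conj, Complex.normSq_eq_norm_sq]

lemma inner_inv_sqrt_smul_inv_sqrt_smul {E : Type*} [NormedAddCommGroup E]
    [InnerProductSpace ℂ E] (x y : E) :
    ⟪((Real.sqrt n : ℂ))⁻¹ • x, ((Real.sqrt n : ℂ))⁻¹ • y⟫ = ⟪x, y⟫ / n := by
  have hsqrt : (Real.sqrt n : ℂ) * Real.sqrt n = n := by
    rw [← Complex.ofReal_mul, Real.mul_self_sqrt n.cast_nonneg, Complex.ofReal_natCast]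
  rw [inner_smul_left, inner_smul_right, map_inv₀, Complex.conj_ofReal, ← mul_assoc, ← mul_inv,
    hsqrt, inv_mul_eq_div]

-- Parseval: `∑ b, v b ⊗ conj (v b)` is the vectorised identity, whichever basis `v` is used.
lemma inner_sum_tensConj_self (hv : Orthonormal ℂ v) (x y : EuclideanSpace ℂ (Fin n)) :
    ⟪∑ b, tensConj (v b) (v b), tensConj x y⟫ = ⟪y, x⟫ := by
  obtain ⟨b, rfl⟩ := exists_orthonormalBasis_coe_eq hv (by simp)
  simp_rw [sum_inner, inner_tensConj, mul_comm ⟪b _, x⟫, b.sum_inner_mul_inner]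

lemma inner_meState_self (hn : n ≠ 0) (hv : Orthonormal ℂ v) : ⟪meState v, meState v⟫ = 1 := by
  rw [meState, inner_inv_sqrt_smul_inv_sqrt_smul, inner_sum]
  simp [inner_sum_tensConj_self hv, hv.norm_eq_one, hn]

end MaximallyEntangled

/-- A family of mutually unbiased orthonormal bases of `ℂ^n`. The number of bases is arbitrary;
being orthonormal, each family `v a` of `n` vectors is automatically a basis. -/
structure IsMUB {n : ℕ} {ι : Type*} (v : ι → Fin n → EuclideanSpace ℂ (Fin n)) : Prop where
  orthonormal : ∀ a, Orthonormal ℂ (v a)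
  norm_inner_sq : ∀ a a', a ≠ a' → ∀ b b', ‖⟪v a b, v a' b'⟫‖ ^ 2 = 1 / n

lemma IsMUB.inner_tensConj_self {n : ℕ} {ι : Type*} [DecidableEq ι]
    {v : ι → Fin n → EuclideanSpace ℂ (Fin n)} (hv : IsMUB v) (a a' : ι) (b b' : Fin n) :
    ⟪tensConj (v a b) (v a b), tensConj (v a' b') (v a' b')⟫ =
      if a = a' then (if b = b' then 1 else 0) else (1 / n : ℂ) := by
  rw [inner_tensConj_self_eq_norm_sq]
  split_ifs with ha hb
  · subst ha hb
    simp [(hv.orthonormal a).norm_eq_one]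
  · subst ha
    simp [(hv.orthonormal a).inner_eq_zero hb]
  · simp [hv.norm_inner_sq a a' ha]

/-- The state `γ_f = (1/√n) Σ_a v_{a,f(a)} ⊗ conj v_{a,f(a)}`, which picks out one vector from each
basis; the bases are indexed by an arbitrary finite type. -/
noncomputable def gammaState {n : ℕ} {ι : Type*} [Fintype ι]
    (v : ι → Fin n → EuclideanSpace ℂ (Fin n)) (f : ι → Fin n) :
    EuclideanSpace ℂ (Fin n × Fin n) :=
  ((Real.sqrt n : ℂ))⁻¹ • ∑ a, tensConj (v a (f a)) (v a (f a))

section GammaState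

variable {n : ℕ} {ι : Type*} [Fintype ι] {v : ι → Fin n → EuclideanSpace ℂ (Fin n)}

lemma inner_meState_gammaState {w : Fin n → EuclideanSpace ℂ (Fin n)} (hw : Orthonormal ℂ w)
    (hv : ∀ a b, ‖v a b‖ = 1) (f : ι → Fin n) :
    ⟪meState w, gammaState v f⟫ = Fintype.card ι / n := by
  rw [meState, gammaState, inner_inv_sqrt_smul_inv_sqrt_smul, inner_sum]
  simp [inner_sum_tensConj_self hw, hv]

lemma inner_gammaState_meState {w : Fin n → EuclideanSpace ℂ (Fin n)} (hw : Orthonormal ℂ w)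
    (hv : ∀ a b, ‖v a b‖ = 1) (f : ι → Fin n) :
    ⟪gammaState v f, meState w⟫ = Fintype.card ι / n := by
  rw [← inner_conj_symm, inner_meState_gammaState hw hv]
  simp

lemma IsMUB.inner_gammaState (hv : IsMUB v) (f g : ι → Fin n) :
    ⟪gammaState v f, gammaState v g⟫ =
      ((Finset.univ.filter fun a => f a = g a).card +
        Fintype.card ι * (Fintype.card ι - 1) / n : ℂ) / n := by
  classical
  have hrow (a : ι) : ∑ a', ⟪tensConj (v a (f a)) (v a (f a)),
      tensConj (v a' (g a')) (v a' (g a'))⟫ =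
        (if f a = g a then 1 else 0) + (Fintype.card ι - 1) / (n : ℂ) := by
    have hoff : ∀ a' ∈ ({a}ᶜ : Finset ι), ⟪tensConj (v a (f a)) (v a (f a)),
        tensConj (v a' (g a')) (v a' (g a'))⟫ = (1 / n : ℂ) := fun a' ha' => by
      rw [hv.inner_tensConj_self, if_neg (by simpa [eq_comm] using ha')]
    rw [Fintype.sum_eq_add_sum_compl a, Finset.sum_congr rfl hoff, hv.inner_tensConj_self,
      if_pos rfl, Finset.sum_const, Finset.card_compl, Finset.card_singleton, nsmul_eq_mul,
      Nat.cast_pred (Fintype.card_pos_iff.mpr ⟨a⟩), mul_one_div]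
  rw [gammaState, gammaState, inner_inv_sqrt_smul_inv_sqrt_smul, sum_inner]
  simp_rw [inner_sum, hrow, Finset.sum_add_distrib, Finset.sum_boole, Finset.sum_const,
    Finset.card_univ, nsmul_eq_mul, mul_div_assoc]

end GammaState

section PsiState

variable {n : ℕ} {v : Fin (n + 1) → Fin n → EuclideanSpace ℂ (Fin n)}

lemma psiState_eq_neg_meState_add_gammaState (f : Fin (n + 1) → Fin n) :
    psiState v f = -meState (v 0) + gammaState v f :=
  rfl

lemma IsMUB.inner_psiState (hv : IsMUB v) (f g : Fin (n + 1) → Fin n) :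
    ⟪psiState v f, psiState v g⟫ =
      (((Finset.univ.filter fun a => f a = g a).card : ℂ) - 1) / n := by
  have hn : n ≠ 0 := (f 0).pos.ne'
  have hn' : (n : ℂ) ≠ 0 := Nat.cast_ne_zero.mpr hn
  have hunit (a : Fin (n + 1)) (b : Fin n) : ‖v a b‖ = 1 := (hv.orthonormal a).norm_eq_one b
  simp only [psiState_eq_neg_meState_add_gammaState, inner_add_left, inner_add_right,
    inner_neg_left, inner_neg_right, inner_meState_self hn (hv.orthonormal 0),
    inner_meState_gammaState (hv.orthonormal 0) hunit,
    inner_gammaState_meState (hv.orthonormal 0) hunit, hv.inner_gammaState,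
    Fintype.card_fin, Nat.cast_add, Nat.cast_one]
  field_simp
  ring

lemma IsMUB.orthonormal_psiState_comp (hv : IsMUB v) {κ : Type*} {F : κ → Fin (n + 1) → Fin n}
    (hF : Pairwise fun p q => ∃! a, F p a = F q a) : Orthonormal ℂ (psiState v ∘ F) := by
  classical
  rw [orthonormal_iff_ite]
  intro p q
  rw [Function.comp_apply, Function.comp_apply, hv.inner_psiState]
  split_ifs with hpq
  · have hn : (n : ℂ) ≠ 0 := Nat.cast_ne_zero.mpr (F p 0).pos.ne'
    simp [hpq, hn]
  · simp [(Fintype.existsUnique_iff_card_one _).mp (hF hpq)]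

end PsiState

namespace IsAffinePlane

variable {n : ℕ} {L : Fin (n + 1) → Finset (Finset (Fin n × Fin n))}

/-- The line of the `i`-th parallel class through the point `p`. -/
noncomputable def lineThrough (hL : IsAffinePlane n L) (i : Fin (n + 1)) (p : Fin n × Fin n) :
    {ℓ // ℓ ∈ L i} :=
  ⟨(hL.class_cover i p).choose, (hL.class_cover i p).choose_spec.1⟩

lemma mem_lineThrough (hL : IsAffinePlane n L) (i : Fin (n + 1)) (p : Fin n × Fin n) :
    p ∈ (hL.lineThrough i p).1 :=
  (hL.class_cover i p).choose_spec.2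

lemma lineThrough_eq_of_mem (hL : IsAffinePlane n L) {i : Fin (n + 1)} {p : Fin n × Fin n}
    {ℓ : {ℓ // ℓ ∈ L i}} (hp : p ∈ ℓ.1) : hL.lineThrough i p = ℓ := by
  by_contra hne
  have hdisj := hL.parallel_disjoint i _ (hL.lineThrough i p).2 _ ℓ.2 (Subtype.coe_ne_coe.mpr hne)
  exact Finset.eq_empty_iff_forall_notMem.mp hdisj p
    (Finset.mem_inter.mpr ⟨hL.mem_lineThrough i p, hp⟩)

lemma lineThrough_eq_lineThrough_iff (hL : IsAffinePlane n L) {i : Fin (n + 1)}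
    {p q : Fin n × Fin n} :
    hL.lineThrough i p = hL.lineThrough i q ↔ ∃ ℓ ∈ L i, p ∈ ℓ ∧ q ∈ ℓ := by
  constructor
  · intro h
    exact ⟨_, (hL.lineThrough i p).2, hL.mem_lineThrough i p, h ▸ hL.mem_lineThrough i q⟩
  · rintro ⟨ℓ, hℓ, hp, hq⟩
    rw [hL.lineThrough_eq_of_mem (ℓ := ⟨ℓ, hℓ⟩) hp, hL.lineThrough_eq_of_mem (ℓ := ⟨ℓ, hℓ⟩) hq]

lemma existsUnique_lineThrough_eq (hL : IsAffinePlane n L) {p q : Fin n × Fin n} (hpq : p ≠ q) :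
    ∃! i, hL.lineThrough i p = hL.lineThrough i q := by
  obtain ⟨ℓ, ⟨⟨i, hℓ⟩, hp, hq⟩, huniq⟩ := hL.unique_line p q hpq
  refine ⟨i, hL.lineThrough_eq_lineThrough_iff.mpr ⟨ℓ, hℓ, hp, hq⟩, fun j hj => ?_⟩
  obtain ⟨ℓ', hℓ', hp', hq'⟩ := hL.lineThrough_eq_lineThrough_iff.mp hj
  obtain rfl : ℓ' = ℓ := huniq ℓ' ⟨⟨j, hℓ'⟩, hp', hq'⟩
  by_contra hji
  exact hL.classes_disjoint j i hji ℓ' hℓ' hℓ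

/-- The function attached to a point `p`: its value at `i` is the number of the line through `p` in
the `i`-th parallel class, for an arbitrary numbering of the `n` lines of each class. -/
noncomputable def lineIndex (hL : IsAffinePlane n L) (p : Fin n × Fin n) (i : Fin (n + 1)) :
    Fin n :=
  Finset.equivFinOfCardEq (hL.card_class i) (hL.lineThrough i p)

lemma pairwise_existsUnique_lineIndex_eq (hL : IsAffinePlane n L) :
    Pairwise fun p q => ∃! i, hL.lineIndex p i = hL.lineIndex q i := by
  intro p q hpq
  simpa only [lineIndex, EmbeddingLike.apply_eq_iff_eq] using hL.existsUnique_lineThrough_eq hpq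

end IsAffinePlane

/-- if there exist `n+1` mutually unbiased orthonormal bases of `ℂ^n` and an
affine plane of order `n`, then there is a set `S` of `n²` functions `{0,…,n} → {1,…,n}`
such that `{ψ_f : f ∈ S}` is an orthonormal basis of `ℂ^n ⊗ ℂ^n`. -/
theorem exists_onb_psiState_of_mub_affinePlane
    (n : ℕ) (hn : 1 ≤ n)
    (v : Fin (n + 1) → Fin n → EuclideanSpace ℂ (Fin n))
    (horth : ∀ a, Orthonormal ℂ (v a))
    (hmub : ∀ a a', a ≠ a' → ∀ b b', ‖⟪v a b, v a' b'⟫‖ ^ 2 = 1 / n)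
    (L : Fin (n + 1) → Finset (Finset (Fin n × Fin n)))
    (hL : IsAffinePlane n L) :
    ∃ S : Finset (Fin (n + 1) → Fin n), S.card = n ^ 2 ∧
      ∃ ob : OrthonormalBasis {f // f ∈ S} ℂ (EuclideanSpace ℂ (Fin n × Fin n)),
        ∀ f : {f // f ∈ S}, ob f = psiState v f.1 := by
  have hψ : Orthonormal ℂ (psiState v ∘ hL.lineIndex) :=
    IsMUB.orthonormal_psiState_comp ⟨horth, hmub⟩ hL.pairwise_existsUnique_lineIndex_eq
  obtain ⟨S, hS, hob⟩ := exists_orthonormalBasis_finset_of_orthonormal_comp hψ (by simp)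
  exact ⟨S, by simpa [sq] using hS, hob⟩
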